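/- Let n ≥ 1, 1 ≤ q ≤ n, let H be an n×n Hermitian matrix with real eigenvalues μ₁,…,μₙ listed with multiplicity, and let C ∈ ℝ. Then the following are equivalent: (i) H(u,u) ≥ C·|u|² for every (0,q)-coefficient system u on ℂⁿ; (ii) for every q-element subset S ⊆ {1,…,n} one has Σ_{i∈S} μᵢ ≥ C. -/

import Mathlib

open scoped BigOperators
open MeasureTheory

namespace HM

/-- The finset of strictly increasing multi-indices of length `q` with entries in `Fin n`. -/
def Incr (n q : ℕ) : Finset (Fin q → Fin n) :=
  Finset.univ.filter (fun I => ∀ a b : Fin q, a < b → I a < I b)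

/-- Prepend the index `k` to a `(q-1)`-tuple `J`, giving the `q`-tuple `kJ`. -/
def cons' {n : ℕ} (q : ℕ) (k : Fin n) (J : Fin (q - 1) → Fin n) : Fin q → Fin n :=
  fun i => if h : (i : ℕ) = 0 then k else J ⟨(i : ℕ) - 1, by have := i.isLt; omega⟩

/-- A (0,q)-coefficient system: an antisymmetric assignment of complex numbers to q-tuples
(hence vanishing on tuples with a repeated index). -/
def IsCoeff {n q : ℕ} (u : (Fin q → Fin n) → ℂ) : Prop :=
  ∀ (σ : Equiv.Perm (Fin q)) (I : Fin q → Fin n),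
    u (I ∘ σ) = ((Equiv.Perm.sign σ : ℤ) : ℂ) * u I

/-- `|u|²`, the sum of `|u_I|²` over strictly increasing multi-indices `I`. -/
noncomputable def nSq {n q : ℕ} (u : (Fin q → Fin n) → ℂ) : ℝ :=
  ∑ I ∈ Incr n q, ‖u I‖ ^ 2

/-- The Hessian form of a matrix `H` on coefficient systems:
`H(u,v) = Σ'_{|J|=q-1} Σ_{k,l} H_{lk} u_{lJ} conj(v_{kJ})`. -/
noncomputable def mForm {n : ℕ} (q : ℕ) (H : Matrix (Fin n) (Fin n) ℂ)
    (u v : (Fin q → Fin n) → ℂ) : ℂ :=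
  ∑ J ∈ Incr n (q - 1), ∑ k : Fin n, ∑ l : Fin n,
    H l k * u (cons' q l J) * star (v (cons' q k J))

/-- `σ^I_J`: the sign of the permutation rearranging `I` into `J`; `0` if `J` is not a
rearrangement of `I` (in particular `0` if `I` has a repeated entry). -/
def permSign {n p : ℕ} (I J : Fin p → Fin n) : ℤ :=
  if Function.Injective I then
    ∑ π : Equiv.Perm (Fin p), if J = I ∘ π then ((Equiv.Perm.sign π : ℤ)) else 0
  else 0

/-- The Wirtinger derivative `∂f/∂z_k` of a complex-valued function, via real Fréchet
derivatives: `½(∂f/∂x_k − i ∂f/∂y_k)`. -/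
noncomputable def dz {n : ℕ} (f : (Fin n → ℂ) → ℂ) (k : Fin n) (z : Fin n → ℂ) : ℂ :=
  (1/2 : ℂ) * (fderiv ℝ f z (Pi.single k 1) - Complex.I * fderiv ℝ f z (Pi.single k Complex.I))

/-- The Wirtinger derivative `∂f/∂z̄_k`: `½(∂f/∂x_k + i ∂f/∂y_k)`. -/
noncomputable def dzbar {n : ℕ} (f : (Fin n → ℂ) → ℂ) (k : Fin n) (z : Fin n → ℂ) : ℂ :=
  (1/2 : ℂ) * (fderiv ℝ f z (Pi.single k 1) + Complex.I * fderiv ℝ f z (Pi.single k Complex.I))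

/-- The mixed Wirtinger Hessian `∂²f/∂z_l∂z̄_k` of a real-valued function. -/
noncomputable def hessW {n : ℕ} (f : (Fin n → ℂ) → ℝ) (l k : Fin n) (z : Fin n → ℂ) : ℂ :=
  dz (fun w => dzbar (fun y => (f y : ℂ)) k w) l z

/-- The Hessian form `i∂∂̄f(u,u)(z) = Σ'_{|J|=q-1} Σ_{k,l} ∂²f/∂z_l∂z̄_k(z) u_{lJ} conj(u_{kJ})`. -/
noncomputable def hForm {n : ℕ} (q : ℕ) (f : (Fin n → ℂ) → ℝ)
    (u : (Fin q → Fin n) → ℂ) (z : Fin n → ℂ) : ℂ :=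
  ∑ J ∈ Incr n (q - 1), ∑ k : Fin n, ∑ l : Fin n,
    hessW f l k z * u (cons' q l J) * star (u (cons' q k J))

/-- Coefficient of `∂̄u` on the `(q+1)`-tuple `M`:
`(∂̄u)_M = Σ_k Σ'_{|J|=q} σ^{kJ}_M ∂u_J/∂z̄_k`. -/
noncomputable def dbarC {n : ℕ} (q : ℕ) (u : (Fin q → Fin n) → (Fin n → ℂ) → ℂ)
    (M : Fin (q + 1) → Fin n) (z : Fin n → ℂ) : ℂ :=
  ∑ k : Fin n, ∑ J ∈ Incr n q, ((permSign (cons' (q + 1) k J) M : ℤ) : ℂ) * dzbar (u J) k z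

/-- Coefficient of `ϑu` on the `(q-1)`-tuple `J`: `(ϑu)_J = −Σ_l ∂u_{lJ}/∂z_l`. -/
noncomputable def thetaC {n : ℕ} (q : ℕ) (u : (Fin q → Fin n) → (Fin n → ℂ) → ℂ)
    (J : Fin (q - 1) → Fin n) (z : Fin n → ℂ) : ℂ :=
  -∑ l : Fin n, dz (u (cons' q l J)) l z

/-- Pointwise `|∂̄u|²`. -/
noncomputable def dbarSq {n : ℕ} (q : ℕ) (u : (Fin q → Fin n) → (Fin n → ℂ) → ℂ)
    (z : Fin n → ℂ) : ℝ :=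
  ∑ M ∈ Incr n (q + 1), ‖dbarC q u M z‖ ^ 2

/-- Pointwise `|ϑu|²`. -/
noncomputable def thetaSq {n : ℕ} (q : ℕ) (u : (Fin q → Fin n) → (Fin n → ℂ) → ℂ)
    (z : Fin n → ℂ) : ℝ :=
  ∑ J ∈ Incr n (q - 1), ‖thetaC q u J z‖ ^ 2

/-- Remove the `i`-th entry of a `j`-tuple, giving a `(j-1)`-tuple. -/
def removeIdx {n j : ℕ} (I : Fin j → Fin n) (i : Fin j) : Fin (j - 1) → Fin n :=
  fun t => if (t : ℕ) < (i : ℕ) then I ⟨t, by have := t.isLt; omega⟩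
    else I ⟨(t : ℕ) + 1, by have := t.isLt; omega⟩

/-- The increasing `j`-tuple listing a finset `S` (with default `d` out of range). -/
def sortedTuple {n : ℕ} (j : ℕ) (S : Finset (Fin n)) (d : Fin n) : Fin j → Fin n :=
  fun t => (S.sort (· ≤ ·)).getD t d

end HM

/-!
Write `H = U D Uᴴ` with `U` unitary and `D` diagonal. Viewing a coefficient system as an alternating
multilinear form, its pullback along `U` is again a coefficient system. Since `q! |u|²` and
`(q-1)! H(u,u)` are the values of the forms `1 ⊗ ⋯ ⊗ 1` and `H ⊗ 1 ⊗ ⋯ ⊗ 1` on functions of all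
`q`-tuples, pulling back preserves the norm and turns the Hessian form of `H` into that of `D`.
By antisymmetry the form of `D = diag d` is itself diagonal, with the value `∑ a, d (I a)` at each
increasing `I`, so it is bounded below by `C` exactly when all these values are at least `C`.
-/

namespace HM

open Finset Function Matrix

section Tuples

variable {q n : ℕ} {α M : Type*}

lemma exists_perm_strictMono_comp [LinearOrder α] {K : Fin q → α} (hK : Injective K) :
    ∃ σ : Equiv.Perm (Fin q), StrictMono (K ∘ σ) :=
  ⟨Tuple.sort K, (Tuple.monotone_sort K).strictMono_of_injective (hK.comp (Equiv.injective _))⟩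

lemma eq_and_eq_of_comp_perm_eq [LinearOrder α] {I J : Fin q → α} (hI : StrictMono I)
    (hJ : StrictMono J) {σ τ : Equiv.Perm (Fin q)} (h : I ∘ σ = J ∘ τ) : I = J ∧ σ = τ := by
  have hrange : Set.range I = Set.range J := by
    simpa only [EquivLike.range_comp] using congrArg Set.range h
  obtain rfl : I = J := (hI.range_inj hJ).1 hrange
  exact ⟨rfl, Equiv.ext fun a => hI.injective (congrFun h a)⟩

lemma forall_strictMono_sum_iff_forall_card_sum [LinearOrder α] [AddCommMonoid M]
    (P : M → Prop) (μ : α → M) :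
    (∀ I : Fin q → α, StrictMono I → P (∑ a, μ (I a))) ↔
      ∀ S : Finset α, S.card = q → P (∑ i ∈ S, μ i) := by
  constructor
  · intro h S hS
    rw [← S.map_orderEmbOfFin_univ hS, sum_map]
    exact h _ (S.orderEmbOfFin hS).strictMono
  · intro h I hI
    simpa using h (univ.map ⟨I, hI.injective⟩) (by simp)

lemma sum_comp_perm {ι κ : Type*} [Fintype ι] [DecidableEq ι] [Fintype κ] [AddCommMonoid M]
    (f : (ι → κ) → M) (σ : Equiv.Perm ι) : ∑ I, f (I ∘ σ) = ∑ I, f I :=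
  (σ.symm.arrowCongr (Equiv.refl κ)).sum_comp f

lemma sum_eq_sum_cons {κ : Type*} [Fintype κ] [AddCommMonoid M] (f : (Fin (q + 1) → κ) → M) :
    ∑ I, f I = ∑ k, ∑ J, f (Fin.cons k J) := by
  rw [← (Fin.consEquiv fun _ => κ).sum_comp, Fintype.sum_prod_type]
  rfl

lemma cons_comp_perm (k : α) (J : Fin q → α) (σ : Equiv.Perm (Fin q)) :
    (Fin.cons k (J ∘ σ) : Fin (q + 1) → α) =
      Fin.cons k J ∘ Equiv.Perm.decomposeFin.symm (0, σ) := by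
  funext i
  cases i using Fin.cases <;> simp

lemma mem_Incr {I : Fin q → Fin n} : I ∈ Incr n q ↔ StrictMono I := by
  simp [Incr, StrictMono]

lemma sum_injective_eq_sum_Incr_perm [AddCommMonoid M] (f : (Fin q → Fin n) → M) :
    ∑ K with Injective K, f K = ∑ I ∈ Incr n q, ∑ σ : Equiv.Perm (Fin q), f (I ∘ σ) := by
  refine Eq.trans (Eq.symm ?_) (sum_product' (Incr n q) univ fun I (σ : Equiv.Perm _) => f (I ∘ σ))
  refine sum_bij (fun x _ => x.1 ∘ x.2) ?maps ?inj ?surj fun _ _ => rfl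
  case maps =>
    rintro ⟨I, σ⟩ hI
    simpa using (mem_Incr.1 (mem_product.1 hI).1).injective
  case inj =>
    rintro ⟨I, σ⟩ hI ⟨J, τ⟩ hJ h
    have hI' : StrictMono I := mem_Incr.1 (mem_product.1 hI).1
    have hJ' : StrictMono J := mem_Incr.1 (mem_product.1 hJ).1
    exact Prod.ext_iff.2 (eq_and_eq_of_comp_perm_eq hI' hJ' h)
  case surj =>
    intro K hK
    obtain ⟨σ, hσ⟩ := exists_perm_strictMono_comp (mem_filter.1 hK).2
    exact ⟨(K ∘ σ, σ⁻¹), by simpa [mem_Incr] using hσ, by simp [comp_assoc]⟩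

lemma sum_eq_factorial_smul_sum_Incr [AddCommMonoid M] {f : (Fin q → Fin n) → M}
    (hperm : ∀ (σ : Equiv.Perm (Fin q)) I, f (I ∘ σ) = f I)
    (hinj : ∀ I, ¬ Injective I → f I = 0) :
    ∑ I, f I = q.factorial • ∑ I ∈ Incr n q, f I := by
  have hsupp : ∑ I, f I = ∑ I with Injective I, f I :=
    (sum_filter_of_ne fun I _ => not_imp_comm.1 (hinj I)).symm
  rw [hsupp, sum_injective_eq_sum_Incr_perm]
  simp [hperm, Fintype.card_perm, smul_sum]

end Tuples

section TensorForm

lemma prod_one_apply {ι κ R : Type*} [Fintype ι] [DecidableEq κ] [CommMonoidWithZero R]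
    (I J : ι → κ) :
    ∏ a, (1 : Matrix κ κ R) (I a) (J a) = if I = J then 1 else 0 := by
  simp only [one_apply, Fintype.prod_boole, funext_iff]

variable {ι κ κ' R : Type*} [Fintype ι] [DecidableEq ι] [Fintype κ] [CommSemiring R]

/-- The pullback along the matrix `A` of a multilinear form in `ι`-many variables, where a form is
encoded by its values `u I` on tuples of basis vectors: the basis vector with index `k` is sent to
the `k`-th column of `A`. -/
def pullback (A : Matrix κ κ' R) (u : (ι → κ) → R) : (ι → κ') → R :=
  fun K => ∑ I, (∏ a, A (I a) (K a)) * u I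

variable [StarRing R]

/-- The sesquilinear form on functions of `ι`-tuples given by the tensor product of the
sesquilinear forms `(x, y) ↦ ∑ k l, M a k l * x k * star (y l)`. -/
def tensorForm (M : ι → Matrix κ κ R) (u v : (ι → κ) → R) : R :=
  ∑ I, ∑ J, (∏ a, M a (I a) (J a)) * (u I * star (v J))

lemma tensorForm_pullback [Fintype κ'] (A : Matrix κ κ' R) (M : ι → Matrix κ' κ' R)
    (u v : (ι → κ) → R) :
    tensorForm M (pullback A u) (pullback A v) = tensorForm (fun a => A * M a * Aᴴ) u v := by
  have hentry (I J : ι → κ) : ∏ a, (A * M a * Aᴴ) (I a) (J a) =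
      ∑ L : ι → κ', ∑ K : ι → κ', ∏ a, A (I a) (K a) * M a (K a) (L a) * star (A (J a) (L a)) := by
    simp only [mul_apply, conjTranspose_apply, sum_mul, Fintype.prod_sum]
  let term (K L : ι → κ') (I J : ι → κ) : R :=
    (∏ a, A (I a) (K a) * M a (K a) (L a) * star (A (J a) (L a))) * (u I * star (v J))
  calc
    _ = ∑ K, ∑ L, ∑ I, ∑ J, term K L I J := by
      simp only [tensorForm, pullback, star_sum, sum_mul_sum]
      simp only [mul_sum, star_mul', star_prod, prod_mul_distrib, term]
      refine sum_congr rfl fun K _ => sum_congr rfl fun L _ => sum_congr rfl fun I _ =>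
        sum_congr rfl fun J _ => ?_
      ring
    _ = ∑ I, ∑ J, ∑ K, ∑ L, term K L I J := by
      rw [sum_comm_cycle]
      exact sum_congr rfl fun I _ => sum_comm_cycle
    _ = _ := by
      simp only [tensorForm, hentry, sum_mul, term]
      exact sum_congr rfl fun I _ => sum_congr rfl fun J _ => sum_comm

lemma tensorForm_one [DecidableEq κ] (u v : (ι → κ) → R) :
    tensorForm (fun _ => 1) u v = ∑ I, u I * star (v I) := by
  simp [tensorForm, prod_one_apply]

lemma tensorForm_cons_one [DecidableEq κ] {p : ℕ} (H : Matrix κ κ R)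
    (u v : (Fin (p + 1) → κ) → R) :
    tensorForm (Fin.cons H fun _ => 1) u v =
      ∑ J, ∑ k, ∑ l, H l k * u (Fin.cons l J) * star (v (Fin.cons k J)) := by
  simp only [tensorForm, sum_eq_sum_cons, Fin.prod_univ_succ, Fin.cons_zero, Fin.cons_succ,
    prod_one_apply, mul_ite, mul_one, mul_zero, ite_mul, zero_mul, sum_ite_eq, mem_univ, if_true,
    ← mul_assoc]
  rw [sum_comm]
  exact sum_congr rfl fun J _ => sum_comm

end TensorForm

section CoefficientSystems

variable {n m q p : ℕ}

lemma IsCoeff.eq_zero_of_not_injective {u : (Fin q → Fin n) → ℂ} (hu : IsCoeff u)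
    {I : Fin q → Fin n} (hI : ¬ Injective I) : u I = 0 := by
  obtain ⟨a, b, hIab, hab⟩ := not_injective_iff.1 hI
  have hswap : I ∘ Equiv.swap a b = I := by
    rw [Equiv.comp_swap_eq_update]
    simp [hIab]
  have hneg : u I = -u I := by simpa [hswap, Equiv.Perm.sign_swap hab] using hu (Equiv.swap a b) I
  exact self_eq_neg.1 hneg

lemma IsCoeff.mul_star_comp_perm {u v : (Fin q → Fin n) → ℂ} (hu : IsCoeff u) (hv : IsCoeff v)
    (σ : Equiv.Perm (Fin q)) (I J : Fin q → Fin n) :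
    u (I ∘ σ) * star (v (J ∘ σ)) = u I * star (v J) := by
  rw [hu, hv]
  obtain h | h := Int.units_eq_one_or (Equiv.Perm.sign σ) <;> simp [h]

protected lemma IsCoeff.pullback {u : (Fin q → Fin n) → ℂ} (hu : IsCoeff u)
    (A : Matrix (Fin n) (Fin m) ℂ) : IsCoeff (pullback A u) := by
  intro σ K
  have hprod (I : Fin q → Fin n) : ∏ a, A ((I ∘ σ) a) ((K ∘ σ) a) = ∏ a, A (I a) (K a) :=
    Equiv.prod_comp σ fun a => A (I a) (K a)
  simp only [pullback]
  rw [← sum_comp_perm _ σ, mul_sum]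
  refine sum_congr rfl fun I _ => ?_
  rw [hprod, hu, mul_left_comm]

lemma isCoeff_permSign (I : Fin q → Fin n) : IsCoeff fun J => (permSign I J : ℂ) := by
  intro τ J
  have hreindex : ∑ σ : Equiv.Perm (Fin q),
      (if J ∘ τ = I ∘ σ then (Equiv.Perm.sign σ : ℤ) else 0) =
        Equiv.Perm.sign τ * ∑ σ : Equiv.Perm (Fin q),
          if J = I ∘ σ then (Equiv.Perm.sign σ : ℤ) else 0 := by
    rw [← Equiv.sum_comp (Equiv.mulRight τ), mul_sum]
    refine sum_congr rfl fun σ _ => ?_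
    simp [← comp_assoc, τ.surjective.injective_comp_right.eq_iff, mul_comm]
  simp only [permSign]
  split_ifs
  · exact_mod_cast hreindex
  · simp

lemma permSign_of_strictMono {I J : Fin q → Fin n} (hI : StrictMono I) (hJ : StrictMono J) :
    permSign I J = if J = I then 1 else 0 := by
  have hiff (σ : Equiv.Perm (Fin q)) : J = I ∘ σ ↔ 1 = σ ∧ J = I := by
    refine ⟨fun h => ?_, by rintro ⟨rfl, rfl⟩; rfl⟩
    exact (eq_and_eq_of_comp_perm_eq hJ hI (σ := 1) (τ := σ) h).symm
  simp [permSign, hI.injective, hiff, ite_and]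

lemma ofReal_nSq (u : (Fin q → Fin n) → ℂ) :
    (nSq u : ℂ) = ∑ I ∈ Incr n q, u I * star (u I) := by
  simp [nSq, Complex.mul_conj']

lemma mForm_succ (H : Matrix (Fin n) (Fin n) ℂ) (u v : (Fin (p + 1) → Fin n) → ℂ) :
    mForm (p + 1) H u v = ∑ J ∈ Incr n p, ∑ k, ∑ l,
      H l k * u (Fin.cons l J) * star (v (Fin.cons k J)) := by
  have hcons (k : Fin n) (J : Fin p → Fin n) : cons' (p + 1) k J = Fin.cons k J := by
    funext i
    cases i using Fin.cases <;> simp [cons']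
  simp only [mForm, ← hcons]
  rfl

lemma IsCoeff.factorial_mul_nSq {u : (Fin q → Fin n) → ℂ} (hu : IsCoeff u) :
    q.factorial * (nSq u : ℂ) = tensorForm (fun _ => 1) u u := by
  rw [ofReal_nSq, tensorForm_one, ← nsmul_eq_mul, sum_eq_factorial_smul_sum_Incr]
  · exact fun σ I => hu.mul_star_comp_perm hu σ I I
  · exact fun I hI => by rw [hu.eq_zero_of_not_injective hI, zero_mul]

lemma IsCoeff.factorial_mul_mForm {u v : (Fin (p + 1) → Fin n) → ℂ} (hu : IsCoeff u)
    (hv : IsCoeff v) (H : Matrix (Fin n) (Fin n) ℂ) :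
    p.factorial * mForm (p + 1) H u v = tensorForm (Fin.cons H fun _ => 1) u v := by
  rw [mForm_succ, tensorForm_cons_one, ← nsmul_eq_mul, sum_eq_factorial_smul_sum_Incr]
  · intro σ J
    simp only [cons_comp_perm, mul_assoc, hu.mul_star_comp_perm hv]
  · intro J hJ
    have hzero (l : Fin n) : u (Fin.cons l J) = 0 :=
      hu.eq_zero_of_not_injective fun h => hJ (Fin.cons_injective_iff.1 h).2
    simp [hzero]

lemma IsCoeff.nSq_pullback {u : (Fin q → Fin n) → ℂ} (hu : IsCoeff u)
    {U : Matrix (Fin n) (Fin m) ℂ} (hU : U * Uᴴ = 1) : nSq (pullback U u) = nSq u := by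
  have h : q.factorial * (nSq (pullback U u) : ℂ) = q.factorial * nSq u := by
    rw [(hu.pullback U).factorial_mul_nSq, hu.factorial_mul_nSq, tensorForm_pullback]
    simp [hU]
  exact_mod_cast mul_left_cancel₀ (Nat.cast_ne_zero.2 q.factorial_ne_zero) h

lemma IsCoeff.mForm_pullback {u v : (Fin (p + 1) → Fin n) → ℂ} (hu : IsCoeff u) (hv : IsCoeff v)
    {U : Matrix (Fin n) (Fin m) ℂ} (hU : U * Uᴴ = 1) (H : Matrix (Fin m) (Fin m) ℂ) :
    mForm (p + 1) H (pullback U u) (pullback U v) = mForm (p + 1) (U * H * Uᴴ) u v := by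
  refine mul_left_cancel₀ (Nat.cast_ne_zero.2 p.factorial_ne_zero) ?_
  rw [(hu.pullback U).factorial_mul_mForm (hv.pullback U), hu.factorial_mul_mForm hv,
    tensorForm_pullback]
  congr 1
  funext a
  cases a using Fin.cases <;> simp [hU]

lemma IsCoeff.factorial_mul_mForm_diagonal {u v : (Fin (p + 1) → Fin n) → ℂ} (hu : IsCoeff u)
    (hv : IsCoeff v) (d : Fin n → ℂ) (a : Fin (p + 1)) :
    p.factorial * mForm (p + 1) (diagonal d) u v = ∑ K, d (K a) * (u K * star (v K)) := by
  rw [hu.factorial_mul_mForm hv, tensorForm_cons_one, ← sum_comp_perm _ (Equiv.swap 0 a)]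
  simp only [hu.mul_star_comp_perm hv, Function.comp_apply, Equiv.swap_apply_right]
  rw [sum_eq_sum_cons, sum_comm]
  simp [diagonal_apply, mul_assoc]

lemma IsCoeff.mForm_diagonal {u v : (Fin (p + 1) → Fin n) → ℂ} (hu : IsCoeff u) (hv : IsCoeff v)
    (d : Fin n → ℂ) :
    mForm (p + 1) (diagonal d) u v =
      ∑ I ∈ Incr n (p + 1), (∑ a, d (I a)) * (u I * star (v I)) := by
  -- `diag d` may act on any of the `p + 1` slots; the formula is the sum over all slots.
  refine mul_left_cancel₀ (Nat.cast_ne_zero.2 (p + 1).factorial_ne_zero) ?_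
  calc
    _ = ∑ _a : Fin (p + 1), p.factorial * mForm (p + 1) (diagonal d) u v := by
      simp [Nat.factorial_succ, mul_assoc]
    _ = ∑ K, (∑ a, d (K a)) * (u K * star (v K)) := by
      rw [sum_congr rfl fun a _ => hu.factorial_mul_mForm_diagonal hv d a, sum_comm]
      simp only [sum_mul]
    _ = _ := by
      rw [← nsmul_eq_mul, sum_eq_factorial_smul_sum_Incr]
      · intro σ I
        rw [hu.mul_star_comp_perm hv]
        exact congrArg (· * _) (Equiv.sum_comp σ fun a => d (I a))
      · exact fun I hI => by rw [hu.eq_zero_of_not_injective hI, zero_mul, mul_zero]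

end CoefficientSystems

section HessianBound

variable {n m p : ℕ} {C : ℝ}

/-- The Hessian form of `H` on `(0,q)`-coefficient systems is bounded below by `C` times the
squared norm. -/
def HessianBound (q : ℕ) (H : Matrix (Fin n) (Fin n) ℂ) (C : ℝ) : Prop :=
  ∀ u : (Fin q → Fin n) → ℂ, IsCoeff u → C * nSq u ≤ (mForm q H u u).re

lemma HessianBound.mul_mul_conjTranspose {H : Matrix (Fin m) (Fin m) ℂ}
    (h : HessianBound (p + 1) H C) {U : Matrix (Fin n) (Fin m) ℂ} (hU : U * Uᴴ = 1) :
    HessianBound (p + 1) (U * H * Uᴴ) C := by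
  intro u hu
  rw [← hu.nSq_pullback hU, ← hu.mForm_pullback hu hU]
  exact h _ (hu.pullback U)

lemma hessianBound_unitary_conj_iff {U : Matrix (Fin n) (Fin n) ℂ} (hU : U ∈ unitaryGroup (Fin n) ℂ)
    {H : Matrix (Fin n) (Fin n) ℂ} :
    HessianBound (p + 1) (U * H * Uᴴ) C ↔ HessianBound (p + 1) H C := by
  have hleft : Uᴴ * U = 1 := mem_unitaryGroup_iff'.1 hU
  refine ⟨fun h => ?_, fun h => h.mul_mul_conjTranspose (mem_unitaryGroup_iff.1 hU)⟩
  have hcancel : Uᴴ * (U * H * Uᴴ) * Uᴴᴴ = H := by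
    simp only [conjTranspose_conjTranspose, Matrix.mul_assoc, hleft, Matrix.mul_one]
    rw [← Matrix.mul_assoc, hleft, Matrix.one_mul]
  rw [← hcancel]
  exact h.mul_mul_conjTranspose (by rwa [conjTranspose_conjTranspose])

lemma hessianBound_diagonal_iff (d : Fin n → ℝ) :
    HessianBound (p + 1) (diagonal fun i => (d i : ℂ)) C ↔
      ∀ I : Fin (p + 1) → Fin n, StrictMono I → C ≤ ∑ a, d (I a) := by
  have hform {u : (Fin (p + 1) → Fin n) → ℂ} (hu : IsCoeff u) :
      (mForm (p + 1) (diagonal fun i => (d i : ℂ)) u u).re =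
        ∑ I ∈ Incr n (p + 1), (∑ a, d (I a)) * ‖u I‖ ^ 2 := by
    rw [hu.mForm_diagonal hu, ← Complex.ofReal_re (∑ I ∈ Incr n (p + 1), _)]
    simp [Complex.mul_conj']
  constructor
  · intro h I hI
    have hsingle (f : (Fin (p + 1) → Fin n) → ℝ) :
        ∑ J ∈ Incr n (p + 1), f J * ‖(permSign I J : ℂ)‖ ^ 2 = f I := by
      rw [sum_eq_single_of_mem I (mem_Incr.2 hI)]
      · simp [permSign_of_strictMono hI hI]
      · intro J hJ hne
        simp [permSign_of_strictMono hI (mem_Incr.1 hJ), hne]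
    have hbound := h _ (isCoeff_permSign I)
    rwa [hform (isCoeff_permSign I), hsingle, nSq, mul_sum, hsingle] at hbound
  · intro h u hu
    rw [hform hu, nSq, mul_sum]
    exact sum_le_sum fun I hI =>
      mul_le_mul_of_nonneg_right (h I (mem_Incr.1 hI)) (sq_nonneg _)

end HessianBound

end HM

/-- For a Hermitian `n×n` matrix `H` and `C ∈ ℝ`, the inequality
`H(u,u) ≥ C·|u|²` for all (0,q)-coefficient systems `u` is equivalent to the sum of the
eigenvalues of `H` over any `q`-element index set being at least `C`. -/
theorem eigenvalue_sum_iff_hessian_bound (n q : ℕ) (hn : 1 ≤ n) (hq1 : 1 ≤ q) (hqn : q ≤ n)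
    (H : Matrix (Fin n) (Fin n) ℂ) (hH : H.IsHermitian) (C : ℝ) :
    (∀ u : (Fin q → Fin n) → ℂ, HM.IsCoeff u →
        C * HM.nSq u ≤ (HM.mForm q H u u).re) ↔
      (∀ S : Finset (Fin n), S.card = q → C ≤ ∑ i ∈ S, hH.eigenvalues i) := by
  obtain ⟨p, rfl⟩ : ∃ p, q = p + 1 := Nat.exists_eq_add_of_le' hq1
  let U : Matrix (Fin n) (Fin n) ℂ := hH.eigenvectorUnitary
  let D : Matrix (Fin n) (Fin n) ℂ := .diagonal fun i => (hH.eigenvalues i : ℂ)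
  have hspectral : H = U * D * U.conjTranspose := hH.spectral_theorem
  calc
    _ ↔ HM.HessianBound (p + 1) (U * D * U.conjTranspose) C := by rw [← hspectral]; rfl
    _ ↔ HM.HessianBound (p + 1) D C := HM.hessianBound_unitary_conj_iff hH.eigenvectorUnitary.2
    _ ↔ ∀ I : Fin (p + 1) → Fin n, StrictMono I → C ≤ ∑ a, hH.eigenvalues (I a) :=
      HM.hessianBound_diagonal_iff hH.eigenvalues
    _ ↔ _ := HM.forall_strictMono_sum_iff_forall_card_sum (C ≤ ·) hH.eigenvalues
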